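/- Let (S,T) be modular data on Φ and let M be a modular invariant satisfying M_{0a} = δ_{0,a} for all a ∈ Φ. Then M is a permutation matrix. -/

import Mathlib

open scoped BigOperators
open Complex

/-- Modular data on a finite set `Φ` with distinguished element `zero`: a unitary symmetric
matrix `S`, a diagonal matrix `T` of finite order, with the `zero`-row of `S` real and
strictly positive, `S² = (ST)³`, and nonnegative-integer fusion coefficients `N a b c` given
by Verlinde's formula. -/
structure ModularData (Φ : Type) [Fintype Φ] [DecidableEq Φ] where
  zero : Φ
  S : Matrix Φ Φ ℂ
  T : Matrix Φ Φ ℂ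
  N : Φ → Φ → Φ → ℕ
  S_unitary : S * S.conjTranspose = 1
  S_symm : ∀ a b, S a b = S b a
  T_diag : ∀ a b, a ≠ b → T a b = 0
  T_order : ∃ m : ℕ, 0 < m ∧ T ^ m = 1
  S_zero_pos : ∀ a, (S zero a).im = 0 ∧ 0 < (S zero a).re
  modular_rel : S ^ 2 = (S * T) ^ 3
  verlinde : ∀ a b c,
    (N a b c : ℂ) = ∑ d, S a d * S b d * (starRingEnd ℂ) (S c d) / S zero d

/-- A modular invariant for modular data `(S,T)`: a matrix of nonnegative integers commuting
(after casting to `ℂ`) with `S` and `T`, and with `M 0 0 = 1`. -/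
def IsModularInvariant {Φ : Type} [Fintype Φ] [DecidableEq Φ] (M : ModularData Φ)
    (Z : Matrix Φ Φ ℕ) : Prop :=
  (Z.map (fun n => (n : ℂ))) * M.S = M.S * (Z.map (fun n => (n : ℂ))) ∧
  (Z.map (fun n => (n : ℂ))) * M.T = M.T * (Z.map (fun n => (n : ℂ))) ∧
  Z M.zero M.zero = 1

/-!
Row `0` of `ZS = SZ` says that the positive vector `v = S_{0·}` satisfies `v Z = v`. At column `0`
this forces `Z_{a0} = δ_{a0}`, so column `0` of `ZS = SZ` in turn yields `Z w = w` for `w = S_{·0}`.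

Since the entries of `Z` are natural numbers, `v Z = v` gives `v_a ≤ v_b` whenever `Z_{ab} ≠ 0`.
The weights `v_a Z_{ab} w_b` have row and column sums `v_a w_a` and `v_b w_b`, so they average `v_a`
and `v_b` to the same value; hence `v_a = v_b` on the support of `Z`. Then `v Z = v` says that each
column of `Z` sums to `1`, and by symmetry so does each row.
-/

open Matrix

theorem exists_eq_single_of_sum_eq_one {ι : Type*} [Fintype ι] [DecidableEq ι] {f : ι → ℕ}
    (hf : ∑ i, f i = 1) : ∃ i, f = Pi.single i 1 := by
  obtain ⟨d, rfl⟩ := Finsupp.equivFunOnFinite.surjective f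
  obtain ⟨i, rfl⟩ := (Finsupp.sum_eq_one_iff d).1 <| by
    rwa [Finsupp.sum_fintype _ _ fun _ => rfl]
  exact ⟨i, Finsupp.single_eq_pi_single i 1⟩

theorem exists_eq_permMatrix_of_mem_doublyStochastic {ι : Type*} [Fintype ι] [DecidableEq ι]
    {Z : Matrix ι ι ℕ} (hZ : Z ∈ doublyStochastic ℕ ι) :
    ∃ σ : Equiv.Perm ι, Z = σ.permMatrix ℕ := by
  have row_single (a : ι) : ∃ b, Z a = Pi.single b 1 :=
    exists_eq_single_of_sum_eq_one (sum_row_of_mem_doublyStochastic hZ a)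
  choose f hf using row_single
  have surjective : Function.Surjective f := by
    intro b
    obtain ⟨a, -, ha⟩ : ∃ a ∈ Finset.univ, Z a b ≠ 0 :=
      Finset.exists_ne_zero_of_sum_ne_zero <| by
        rw [sum_col_of_mem_doublyStochastic hZ b]
        exact one_ne_zero
    refine ⟨a, ?_⟩
    by_contra hne
    exact ha (by rw [hf, Pi.single_eq_of_ne' hne])
  refine ⟨Equiv.ofBijective f (Finite.surjective_iff_bijective.1 surjective), ?_⟩
  ext a b
  simp [hf, Equiv.Perm.permMatrix, Pi.single_apply, eq_comm]

theorem row_vecMul_eq_of_commute {ι R : Type*} [Fintype ι] [DecidableEq ι] [Semiring R]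
    {A S : Matrix ι ι R} {i : ι} (hAS : Commute A S) (hA : A i = Pi.single i 1) :
    S i ᵥ* A = S i :=
  calc
    S i ᵥ* A = (S * A) i := (mul_apply_eq_vecMul S A i).symm
    _ = (A * S) i := by rw [hAS.eq]
    _ = A i ᵥ* S := mul_apply_eq_vecMul A S i
    _ = S i := by rw [hA, single_one_vecMul, row_def]

section LeftFixedVector

variable {ι R : Type*} [Fintype ι] [Semiring R] [PartialOrder R] {Z : Matrix ι ι ℕ} {v : ι → R}

theorem le_of_vecMul_eq_self [IsOrderedRing R] (hv : 0 ≤ v) (hvZ : v ᵥ* Z.map (↑) = v)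
    {a b : ι} (hab : Z a b ≠ 0) : v a ≤ v b :=
  calc
    v a ≤ v a * Z a b :=
      le_mul_of_one_le_right (hv a) <| by
        simpa using Nat.mono_cast (α := R) (Nat.one_le_iff_ne_zero.2 hab)
    _ ≤ ∑ c, v c * Z c b :=
      Finset.single_le_sum (f := fun c => v c * (Z c b : R))
        (fun c _ => mul_nonneg (hv c) (Nat.cast_nonneg _)) (Finset.mem_univ a)
    _ = v b := congrFun hvZ b

theorem eq_zero_of_vecMul_eq_self [IsStrictOrderedRing R] (hv : ∀ a, 0 < v a)
    (hvZ : v ᵥ* Z.map (↑) = v) {a b : ι} (hb : Z b b = 1) (hab : a ≠ b) : Z a b = 0 := by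
  by_contra hne
  have two_terms : v a * Z a b + v b * Z b b ≤ ∑ c, v c * Z c b :=
    Finset.add_le_sum (f := fun c => v c * (Z c b : R))
      (fun c _ => mul_nonneg (hv c).le (Nat.cast_nonneg _)) (Finset.mem_univ a)
      (Finset.mem_univ b) hab
  have pos : 0 < v a * Z a b := mul_pos (hv a) (Nat.cast_pos.2 (Nat.pos_of_ne_zero hne))
  refine (lt_add_of_pos_left (v b) pos).not_ge ?_
  calc
    v a * Z a b + v b = v a * Z a b + v b * Z b b := by rw [hb, Nat.cast_one, mul_one]
    _ ≤ ∑ c, v c * Z c b := two_terms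
    _ = v b := congrFun hvZ b

end LeftFixedVector

theorem sum_mul_fst_eq_sum_mul_snd_of_fixed_vectors {ι R : Type*} [Fintype ι] [CommSemiring R]
    {A : Matrix ι ι R} {v w : ι → R} (hvA : v ᵥ* A = v) (hAw : A *ᵥ w = w) (f : ι → R) :
    ∑ x : ι × ι, v x.1 * A x.1 x.2 * w x.2 * f x.1 =
      ∑ x : ι × ι, v x.1 * A x.1 x.2 * w x.2 * f x.2 := by
  have row_sum (a : ι) : ∑ b, v a * A a b * w b = v a * w a := by
    simp only [mul_assoc, ← Finset.mul_sum]
    exact congrArg (v a * ·) (congrFun hAw a)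
  have col_sum (b : ι) : ∑ a, v a * A a b * w b = v b * w b := by
    rw [← Finset.sum_mul]
    exact congrArg (· * w b) (congrFun hvA b)
  rw [Fintype.sum_prod_type, Fintype.sum_prod_type_right]
  simp only [← Finset.sum_mul, row_sum, col_sum]

section FixedVectors

variable {ι R : Type*} [Fintype ι] [CommSemiring R] [PartialOrder R] [IsStrictOrderedRing R]
  {Z : Matrix ι ι ℕ} {v w : ι → R}

theorem eq_of_fixed_vectors (hv : ∀ a, 0 < v a) (hw : ∀ a, 0 < w a)
    (hvZ : v ᵥ* Z.map (↑) = v) (hZw : Z.map (↑) *ᵥ w = w) {a b : ι} (hab : Z a b ≠ 0) :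
    v a = v b := by
  have le_of_ne_zero {c d : ι} (hcd : Z c d ≠ 0) : v c ≤ v d :=
    le_of_vecMul_eq_self (fun c => (hv c).le) hvZ hcd
  have weight_pos {c d : ι} (hcd : Z c d ≠ 0) : 0 < v c * Z c d * w d :=
    mul_pos (mul_pos (hv c) (Nat.cast_pos.2 (Nat.pos_of_ne_zero hcd))) (hw d)
  have weighted_le (x : ι × ι) :
      v x.1 * Z x.1 x.2 * w x.2 * v x.1 ≤ v x.1 * Z x.1 x.2 * w x.2 * v x.2 := by
    by_cases hx : Z x.1 x.2 = 0
    · simp [hx]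
    · exact mul_le_mul_of_nonneg_left (le_of_ne_zero hx) (weight_pos hx).le
  have weighted_eq : v a * Z a b * w b * v a = v a * Z a b * w b * v b :=
    (Finset.sum_eq_sum_iff_of_le fun x _ => weighted_le x).1
      (sum_mul_fst_eq_sum_mul_snd_of_fixed_vectors hvZ hZw v) (a, b) (Finset.mem_univ _)
  exact (le_of_ne_zero hab).eq_of_not_lt fun hlt =>
    (mul_lt_mul_of_pos_left hlt (weight_pos hab)).ne weighted_eq

theorem sum_col_eq_one_of_fixed_vectors (hv : ∀ a, 0 < v a) (hw : ∀ a, 0 < w a)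
    (hvZ : v ᵥ* Z.map (↑) = v) (hZw : Z.map (↑) *ᵥ w = w) (b : ι) : ∑ a, Z a b = 1 := by
  refine (nsmul_left_strictMono (hv b)).injective ?_
  calc
    (∑ a, Z a b) • v b = ∑ a, Z a b • v b := (Finset.sum_nsmul_assoc ..).symm
    _ = ∑ a, v a * Z a b := Finset.sum_congr rfl fun a _ => by
      by_cases hab : Z a b = 0
      · simp [hab]
      · rw [eq_of_fixed_vectors hv hw hvZ hZw hab, nsmul_eq_mul, mul_comm]
    _ = v b := congrFun hvZ b
    _ = 1 • v b := (one_nsmul _).symm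

theorem mem_doublyStochastic_of_fixed_vectors [DecidableEq ι] (hv : ∀ a, 0 < v a)
    (hw : ∀ a, 0 < w a) (hvZ : v ᵥ* Z.map (↑) = v) (hZw : Z.map (↑) *ᵥ w = w) :
    Z ∈ doublyStochastic ℕ ι :=
  mem_doublyStochastic_iff_sum.2
    ⟨fun _ _ => Nat.zero_le _,
      sum_col_eq_one_of_fixed_vectors (Z := Zᵀ) hw hv
        (by rwa [transpose_map, vecMul_transpose]) (by rwa [transpose_map, mulVec_transpose]),
      sum_col_eq_one_of_fixed_vectors hv hw hvZ hZw⟩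

end FixedVectors

theorem modularData_invariant_perm_general {Φ R : Type*} [Fintype Φ] [DecidableEq Φ]
    [CommSemiring R] [PartialOrder R] [IsStrictOrderedRing R] {S : Matrix Φ Φ R}
    {Z : Matrix Φ Φ ℕ} {o : Φ} (hrow_pos : ∀ a, 0 < S o a) (hcol_pos : ∀ a, 0 < S a o)
    (hZS : Commute (Z.map (↑)) S) (hrow : ∀ a, Z o a = if o = a then 1 else 0) :
    ∃ σ : Equiv.Perm Φ, ∀ a b, Z a b = if b = σ a then 1 else 0 := by
  have fixed_row : S o ᵥ* Z.map (↑) = S o :=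
    row_vecMul_eq_of_commute hZS <| by
      ext a
      simp [hrow, Pi.single_apply, eq_comm]
  have hcol (a : Φ) : Z a o = if a = o then 1 else 0 := by
    split_ifs with ha
    · simp [ha, hrow]
    · exact eq_zero_of_vecMul_eq_self hrow_pos fixed_row (by simp [hrow]) ha
  have fixed_col : Z.map (↑) *ᵥ Sᵀ o = Sᵀ o := by
    rw [← vecMul_transpose]
    refine row_vecMul_eq_of_commute ?_ ?_
    · rw [commute_iff_eq, ← transpose_mul, ← transpose_mul, hZS.eq]
    · ext a
      simp [hcol, Pi.single_apply]
  obtain ⟨σ, rfl⟩ := exists_eq_permMatrix_of_mem_doublyStochastic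
    (mem_doublyStochastic_of_fixed_vectors hrow_pos hcol_pos fixed_row fixed_col)
  exact ⟨σ, fun a b => by simp [eq_comm]⟩

open scoped ComplexOrder

theorem ModularData.zero_row_pos {Φ : Type} [Fintype Φ] [DecidableEq Φ] (M : ModularData Φ)
    (a : Φ) : 0 < M.S M.zero a :=
  Complex.pos_iff.2 ⟨(M.S_zero_pos a).2, (M.S_zero_pos a).1.symm⟩

/-- A modular invariant whose `0`-row is `δ_{0,a}` is a permutation
matrix. -/
theorem modularData_invariant_perm
    {Φ : Type} [Fintype Φ] [DecidableEq Φ] (M : ModularData Φ)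
    (Z : Matrix Φ Φ ℕ) (hZ : IsModularInvariant M Z)
    (hrow : ∀ a, Z M.zero a = if M.zero = a then 1 else 0) :
    ∃ σ : Equiv.Perm Φ, ∀ a b, Z a b = if b = σ a then 1 else 0 := by
  have zero_col_pos (a : Φ) : 0 < M.S a M.zero := M.S_symm M.zero a ▸ M.zero_row_pos a
  exact modularData_invariant_perm_general M.zero_row_pos zero_col_pos hZ.1 hrow
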